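/- Let n ≥ 2, α_n = 1/2 − 1/(2n), and let ψ ∈ L²(Ω, z dμ) with Ω = ℝⁿ × (0,∞). Define λ ∈ 𝒮'(ℝⁿ) via its Fourier transform λ̂(ξ) = |ξ|² ∫_0^∞ s ψ̂(ξ,s) u₁(s|ξ|^{1/α_n}) ds, where u₁(z) = (1/α_n) K_0(z^{α_n}/α_n), assuming ψ is supported in ℝⁿ × (0,1]. Then λ ∈ L²(ℝⁿ) with ‖λ‖_{L²(ℝⁿ)} ≤ C ‖ψ‖_{L²(Ω, z dμ)} for a constant C depending only on n. -/

import Mathlib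

open MeasureTheory
open scoped FourierTransform

/-- The modified Bessel function of the second kind of order `0`. -/
noncomputable def besselK0 (x : ℝ) : ℝ :=
  ∫ t in Set.Ioi (0 : ℝ), Real.exp (-x * Real.cosh t)

/-- `α_n = 1/2 − 1/(2n)`. -/
noncomputable def alphaN (n : ℕ) : ℝ := 1 / 2 - 1 / (2 * n)

/-- `u₁(z) = (1/α_n) K₀(z^{α_n}/α_n)`. -/
noncomputable def taubU1 (n : ℕ) (z : ℝ) : ℝ :=
  (1 / alphaN n) * besselK0 (z ^ alphaN n / alphaN n)

/-!
The function `z ↦ z^{2α} u₁(z)` is bounded on `(0,∞)`, so `|λ̂(ξ)| ≲ ∫₀¹ s^{1-2α} |ψ̂(ξ,s)| ds`.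
By Cauchy–Schwarz in `s`, splitting `s^{1-2α} = s^{1/2-2α} · s^{1/2}`, this gives
`|λ̂(ξ)|² ≲ ∫₀¹ s |ψ̂(ξ,s)|² ds`; here `α < 1/2` makes `s^{1-4α}` integrable at `0`. Integrating in
`ξ`, exchanging the integrals and applying Plancherel on each slice yields the bound.

Only `‖ψ‖² s` is known to be measurable, so `ψ̂(ξ,·)` may fail to be measurable. But `ψ̂(·,s)` is
always continuous, so `ψ̂` is jointly measurable over the closed set of those `ξ` for which
`ψ̂(ξ,·)` is measurable; for every other `ξ` the integral defining `λ̂(ξ)` has the junk value `0`.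
-/

open Set Filter Topology
open scoped ENNReal SchwartzMap

/-! ### The Fourier transform of an arbitrary function -/

section Fourier

variable {E F : Type*} [NormedAddCommGroup E] [InnerProductSpace ℝ E] [FiniteDimensional ℝ E]
  [MeasurableSpace E] [BorelSpace E] [NormedAddCommGroup F]

theorem fourier_eq_zero_of_not_integrable [NormedSpace ℂ F] {f : E → F} (hf : ¬Integrable f) :
    𝓕 f = 0 := by
  ext ξ
  rw [Real.fourier_eq]
  exact integral_undef fun h => hf ((Real.fourierIntegral_convergent_iff ξ).1 h)

theorem continuous_fourierTransform [NormedSpace ℂ F] (f : E → F) : Continuous (𝓕 f) := by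
  by_cases hf : Integrable f
  · exact VectorFourier.fourierIntegral_continuous (L := innerₗ E) Real.continuous_fourierChar
      continuous_inner hf
  · rw [fourier_eq_zero_of_not_integrable hf]
    exact continuous_zero

theorem integral_fourier_smul_eq_of_integrable [NormedSpace ℂ F] [CompleteSpace F] {φ : E → ℂ}
    {f : E → F} (hφ : Integrable φ) (hf : Integrable f) : ∫ ξ, 𝓕 φ ξ • f ξ = ∫ x, φ x • 𝓕 f x := by
  have h := VectorFourier.integral_fourierIntegral_smul_eq_flip (L := innerₗ E)
    Real.continuous_fourierChar continuous_inner hφ hf (μ := volume) (ν := volume)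
  rwa [flip_innerₗ] at h

variable [InnerProductSpace ℂ F] [CompleteSpace F]

theorem fourier_toLp_ae_eq {f : E → F} (hf₁ : Integrable f) (hf₂ : MemLp f 2) :
    (𝓕 (hf₂.toLp f) : Lp F 2 (volume : Measure E)) =ᵐ[volume] 𝓕 f := by
  refine ae_eq_of_integral_contDiff_smul_eq ((Lp.memLp _).locallyIntegrable (by norm_num))
    (continuous_fourierTransform f).locallyIntegrable fun g hg_smooth hg_supp => ?_
  have hg_supp' : HasCompactSupport (Complex.ofRealCLM ∘ g) := hg_supp.comp_left rfl
  set φ : 𝓢(E, ℂ) := hg_supp'.toSchwartzMap (Complex.ofRealCLM.contDiff.comp hg_smooth) with hφ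
  have smul_eq (c : F) (x : E) : g x • c = φ x • c := by simp [hφ]
  calc ∫ ξ, g ξ • (𝓕 (hf₂.toLp f) : Lp F 2 (volume : Measure E)) ξ
      = ((𝓕 (hf₂.toLp f) : Lp F 2 (volume : Measure E)) : 𝓢'(E, F)) φ := by
        simp only [smul_eq, Lp.toTemperedDistribution_apply]
    _ = ∫ x, 𝓕 φ x • hf₂.toLp f x := by
        rw [← Lp.fourier_toTemperedDistribution_eq, TemperedDistribution.fourier_apply,
          Lp.toTemperedDistribution_apply]
    _ = ∫ x, 𝓕 φ x • f x := by
        refine integral_congr_ae ?_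
        filter_upwards [hf₂.coeFn_toLp] with x hx
        rw [hx]
    _ = ∫ ξ, φ ξ • 𝓕 f ξ := integral_fourier_smul_eq_of_integrable φ.integrable hf₁
    _ = ∫ ξ, g ξ • 𝓕 f ξ := by simp only [smul_eq]

theorem eLpNorm_fourier_le (f : E → F) : eLpNorm (𝓕 f) 2 volume ≤ eLpNorm f 2 volume := by
  by_cases hf₁ : Integrable f
  swap
  · simp [fourier_eq_zero_of_not_integrable hf₁]
  by_cases hf₂ : MemLp f 2
  · have h := Lp.norm_fourier_eq (hf₂.toLp f)
    rw [Lp.norm_def, Lp.norm_def, ENNReal.toReal_eq_toReal_iff' (Lp.eLpNorm_ne_top _)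
      (Lp.eLpNorm_ne_top _), eLpNorm_congr_ae (fourier_toLp_ae_eq hf₁ hf₂),
      eLpNorm_congr_ae hf₂.coeFn_toLp] at h
    exact h.le
  · have h : eLpNorm f 2 volume = ∞ := by
      by_contra h
      exact hf₂ ⟨hf₁.1, lt_top_iff_ne_top.2 h⟩
    exact h ▸ le_top

theorem lintegral_enorm_fourier_sq_le (f : E → F) :
    ∫⁻ ξ, ‖𝓕 f ξ‖ₑ ^ 2 ≤ ∫⁻ x, ‖f x‖ₑ ^ 2 := by
  have lintegral_eq (g : E → F) : ∫⁻ x, ‖g x‖ₑ ^ 2 = eLpNorm g 2 volume ^ 2 := by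
    simpa using (eLpNorm_nnreal_pow_eq_lintegral (μ := (volume : Measure E)) (f := g)
      (p := 2) two_ne_zero).symm
  rw [lintegral_eq, lintegral_eq]
  gcongr
  exact eLpNorm_fourier_le f

end Fourier

/-! ### Joint measurability of functions continuous in one variable -/

section Caratheodory

variable {X S Y : Type*} [TopologicalSpace X] [MeasurableSpace S] [TopologicalSpace Y]
  [TopologicalSpace.PseudoMetrizableSpace Y] {F : X → S → Y}

theorem isClosed_setOf_stronglyMeasurable [FirstCountableTopology X]
    (hF : ∀ s, Continuous fun x => F x s) : IsClosed {x | StronglyMeasurable (F x)} :=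
  IsSeqClosed.isClosed fun _ x hmeas hlim =>
    stronglyMeasurable_of_tendsto atTop hmeas <|
      tendsto_pi_nhds.2 fun s => ((hF s).tendsto x).comp hlim

theorem isClosed_setOf_aestronglyMeasurable [FirstCountableTopology X]
    (hF : ∀ s, Continuous fun x => F x s) (ν : Measure S) :
    IsClosed {x | AEStronglyMeasurable (F x) ν} :=
  IsSeqClosed.isClosed fun _ x hmeas hlim =>
    aestronglyMeasurable_of_tendsto_ae atTop hmeas <|
      ae_of_all ν fun s => ((hF s).tendsto x).comp hlim

variable [TopologicalSpace.MetrizableSpace X] [SecondCountableTopology X] [MeasurableSpace X]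
  [OpensMeasurableSpace X] {μ : Measure X} {ν : Measure S}

theorem exists_stronglyMeasurable_uncurry_ae_eq (hF : ∀ s, Continuous fun x => F x s)
    (hmeas : ∀ x, AEStronglyMeasurable (F x) ν) :
    ∃ G : X × S → Y, StronglyMeasurable G ∧ ∀ᵐ s ∂ν, ∀ x, F x s = G (x, s) := by
  classical
  rcases isEmpty_or_nonempty X with _ | _
  · exact ⟨fun p => isEmptyElim p.1, .of_subsingleton_dom, by simp⟩
  let x := TopologicalSpace.denseSeq X
  let F' (k : ℕ) : S → Y := (hmeas (x k)).mk (F (x k))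
  have hF' (k : ℕ) : StronglyMeasurable (F' k) := (hmeas (x k)).stronglyMeasurable_mk
  obtain ⟨t, ht_ae, ht_meas, ht_eq⟩ :=
    (ae_all_iff.2 fun k => (hmeas (x k)).ae_eq_mk).exists_measurable_mem
  let G (y : X) : S → Y := t.piecewise (F y) (F' 0)
  have hG_cont (s : S) : Continuous fun y => G y s := by
    by_cases hs : s ∈ t
    · simpa only [G, piecewise_eq_of_mem _ _ _ hs] using hF s
    · simpa only [G, piecewise_eq_of_notMem _ _ _ hs] using continuous_const
  have hG_dense (k : ℕ) : StronglyMeasurable (G (x k)) := by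
    have hG_eq : G (x k) = t.piecewise (F' k) (F' 0) := by
      ext s
      by_cases hs : s ∈ t
      · simpa only [G, piecewise_eq_of_mem _ _ _ hs] using ht_eq s hs k
      · simp only [G, piecewise_eq_of_notMem _ _ _ hs]
    exact hG_eq ▸ (hF' k).piecewise ht_meas (hF' 0)
  have hG_meas (y : X) : StronglyMeasurable (G y) :=
    (TopologicalSpace.denseRange_denseSeq X).induction_on y
      (isClosed_setOf_stronglyMeasurable hG_cont) hG_dense
  refine ⟨Function.uncurry G,
    stronglyMeasurable_uncurry_of_continuous_of_stronglyMeasurable hG_cont hG_meas, ?_⟩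
  filter_upwards [ht_ae] with s hs y
  exact (piecewise_eq_of_mem _ _ _ hs).symm

theorem aestronglyMeasurable_uncurry_of_continuous (hF : ∀ s, Continuous fun x => F x s)
    (hmeas : ∀ᵐ x ∂μ, AEStronglyMeasurable (F x) ν) :
    AEStronglyMeasurable (Function.uncurry F) (μ.prod ν) := by
  set M := {x | AEStronglyMeasurable (F x) ν}
  have hM : MeasurableSet M := (isClosed_setOf_aestronglyMeasurable hF ν).measurableSet
  obtain ⟨G, hG_meas, hG_eq⟩ := exists_stronglyMeasurable_uncurry_ae_eq (F := fun x : M => F x)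
    (fun s => (hF s).comp continuous_subtype_val) fun x => x.2
  have hι : MeasurableEmbedding (Prod.map (↑) id : M × S → X × S) :=
    (MeasurableEmbedding.subtype_coe hM).prodMap .id
  obtain ⟨G', hG'_meas, hG'_eq⟩ :=
    hι.exists_stronglyMeasurable_extend hG_meas fun p => ⟨F p.1 p.2⟩
  refine ⟨G', hG'_meas, ?_⟩
  filter_upwards [Measure.quasiMeasurePreserving_fst.ae hmeas,
    Measure.quasiMeasurePreserving_snd.ae hG_eq] with p hp₁ hp₂
  exact (hp₂ ⟨p.1, hp₁⟩).trans (congrFun hG'_eq (⟨p.1, hp₁⟩, p.2)).symm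

end Caratheodory

/-! ### The Bessel kernel -/

section Bessel

theorem exp_neg_mul_cosh_le {x : ℝ} (hx : 0 < x) (t : ℝ) :
    Real.exp (-x * Real.cosh t) ≤ 8 / x ^ 2 * Real.exp (-2 * t) := by
  have cosh_ge : Real.exp t / 2 ≤ Real.cosh t := by
    rw [Real.cosh_eq]
    linarith [Real.exp_pos (-t)]
  have exp_ge : (x * Real.exp t) ^ 2 / 8 ≤ Real.exp (x * Real.cosh t) :=
    calc (x * Real.exp t) ^ 2 / 8 = (x * (Real.exp t / 2)) ^ 2 / 2 := by ring
      _ ≤ (x * Real.cosh t) ^ 2 / 2 := by gcongr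
      _ ≤ Real.exp (x * Real.cosh t) := by
        have hcosh := Real.cosh_pos t
        have := Real.quadratic_le_exp_of_nonneg (x := x * Real.cosh t) (by positivity)
        linarith [mul_pos hx hcosh]
  calc Real.exp (-x * Real.cosh t) = (Real.exp (x * Real.cosh t))⁻¹ := by
        rw [neg_mul, Real.exp_neg]
    _ ≤ ((x * Real.exp t) ^ 2 / 8)⁻¹ := inv_anti₀ (by positivity) exp_ge
    _ = 8 / x ^ 2 * Real.exp (-2 * t) := by
        rw [show -2 * t = -t + -t by ring, Real.exp_add, Real.exp_neg]
        field_simp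

theorem integrableOn_exp_neg_mul_cosh {x : ℝ} (hx : 0 < x) :
    IntegrableOn (fun t => Real.exp (-x * Real.cosh t)) (Ioi 0) := by
  refine ((integrableOn_exp_mul_Ioi (a := -2) (by norm_num) 0).const_mul (8 / x ^ 2)).mono'
    (Continuous.aestronglyMeasurable (by fun_prop)) (ae_of_all _ fun t => ?_)
  rw [Real.norm_of_nonneg (Real.exp_pos _).le]
  exact exp_neg_mul_cosh_le hx t

theorem besselK0_pos {x : ℝ} (hx : 0 < x) : 0 < besselK0 x := by
  refine (setIntegral_pos_iff_support_of_nonneg_ae (ae_of_all _ fun t => (Real.exp_pos _).le)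
    (integrableOn_exp_neg_mul_cosh hx)).2 ?_
  have h : Function.support (fun t => Real.exp (-x * Real.cosh t)) = univ :=
    Function.support_eq_univ fun t => (Real.exp_pos _).ne'
  rw [h, univ_inter, Real.volume_Ioi]
  exact ENNReal.zero_lt_top

theorem sq_mul_besselK0_le {x : ℝ} (hx : 0 < x) : x ^ 2 * besselK0 x ≤ 4 := by
  have h : besselK0 x ≤ 4 / x ^ 2 :=
    calc besselK0 x ≤ ∫ t in Ioi (0 : ℝ), 8 / x ^ 2 * Real.exp (-2 * t) :=
          integral_mono (integrableOn_exp_neg_mul_cosh hx)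
            ((integrableOn_exp_mul_Ioi (by norm_num) 0).const_mul _) (exp_neg_mul_cosh_le hx)
      _ = 4 / x ^ 2 := by
          rw [integral_const_mul, integral_exp_mul_Ioi (by norm_num), mul_zero, Real.exp_zero]
          ring
  rwa [le_div_iff₀' (by positivity)] at h

theorem measurable_besselK0 : Measurable besselK0 :=
  (StronglyMeasurable.integral_prod_right (f := fun x t : ℝ => Real.exp (-x * Real.cosh t))
    (Continuous.stronglyMeasurable (by fun_prop))).measurable

theorem measurable_taubU1 (n : ℕ) : Measurable (taubU1 n) :=
  (measurable_besselK0.comp (by fun_prop)).const_mul _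

theorem alphaN_pos {n : ℕ} (hn : 2 ≤ n) : 0 < alphaN n := by
  have : (2 : ℝ) ≤ n := mod_cast hn
  rw [alphaN, sub_pos]
  gcongr
  linarith

theorem alphaN_lt_half {n : ℕ} (hn : 0 < n) : alphaN n < 1 / 2 :=
  sub_lt_self _ (by positivity)

theorem taubU1_pos {n : ℕ} (hn : 2 ≤ n) {z : ℝ} (hz : 0 < z) : 0 < taubU1 n z := by
  have hα := alphaN_pos hn
  exact mul_pos (by positivity) (besselK0_pos (by positivity))

theorem rpow_mul_taubU1_le {n : ℕ} (hn : 2 ≤ n) {z : ℝ} (hz : 0 < z) :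
    z ^ (2 * alphaN n) * taubU1 n z ≤ 4 * alphaN n := by
  have hα := alphaN_pos hn
  rw [taubU1]
  set α := alphaN n
  calc z ^ (2 * α) * (1 / α * besselK0 (z ^ α / α))
      = α * ((z ^ α / α) ^ 2 * besselK0 (z ^ α / α)) := by
        rw [mul_comm 2 α, Real.rpow_mul hz.le, Real.rpow_two]
        field_simp
    _ ≤ α * 4 := by
        gcongr
        exact sq_mul_besselK0_le (by positivity)
    _ = 4 * α := mul_comm _ _

end Bessel

/-! ### Weighted Cauchy–Schwarz on `(0, T]` -/

section CauchySchwarz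

theorem sq_lintegral_mul_le {X : Type*} [MeasurableSpace X] {μ : Measure X} {f g : X → ℝ≥0∞}
    (hf : AEMeasurable f μ) (hg : AEMeasurable g μ) :
    (∫⁻ x, f x * g x ∂μ) ^ 2 ≤ (∫⁻ x, f x ^ 2 ∂μ) * ∫⁻ x, g x ^ 2 ∂μ := by
  have sq_rpow_half (a : ℝ≥0∞) : (a ^ (1 / 2 : ℝ)) ^ 2 = a := by
    rw [← ENNReal.rpow_two, ← ENNReal.rpow_mul]
    norm_num
  have h := pow_le_pow_left₀ zero_le
    (ENNReal.lintegral_mul_le_Lp_mul_Lq μ Real.HolderConjugate.two_two hf hg) 2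
  simpa only [mul_pow, sq_rpow_half, ENNReal.rpow_two, Pi.mul_apply] using h

theorem lintegral_Ioc_rpow_sub_one {β T : ℝ} (hβ : 0 < β) (hT : 0 ≤ T) :
    ∫⁻ s in Ioc 0 T, ENNReal.ofReal (s ^ (β - 1)) = ENNReal.ofReal (T ^ β / β) := by
  have hβ' : -1 < β - 1 := by linarith
  have hint := intervalIntegral.intervalIntegrable_rpow' (a := 0) (b := T) hβ'
  rw [intervalIntegrable_iff_integrableOn_Ioc_of_le hT] at hint
  have hnonneg : 0 ≤ᵐ[volume.restrict (Ioc 0 T)] fun s : ℝ => s ^ (β - 1) := by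
    filter_upwards [ae_restrict_mem measurableSet_Ioc] with s hs
    exact Real.rpow_nonneg hs.1.le _
  rw [← ofReal_integral_eq_lintegral_ofReal hint hnonneg, ← intervalIntegral.integral_of_le hT,
    integral_rpow (.inl hβ'), sub_add_cancel, Real.zero_rpow hβ.ne', sub_zero]

theorem sq_lintegral_rpow_mul_le {β T : ℝ} (hβ : 0 < β) (hT : 0 ≤ T) {g : ℝ → ℝ≥0∞}
    (hg : AEMeasurable g (volume.restrict (Ioc 0 T))) :
    (∫⁻ s in Ioc 0 T, ENNReal.ofReal (s ^ β) * g s) ^ 2 ≤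
      ENNReal.ofReal (T ^ (2 * β) / (2 * β)) *
        ∫⁻ s in Ioc 0 T, ENNReal.ofReal s * g s ^ 2 := by
  have ofReal_rpow_sq {s : ℝ} (hs : 0 < s) (γ : ℝ) :
      ENNReal.ofReal (s ^ γ) ^ 2 = ENNReal.ofReal (s ^ (2 * γ)) := by
    rw [← ENNReal.ofReal_pow (by positivity), ← Real.rpow_mul_natCast hs.le, mul_comm 2 γ,
      Nat.cast_two]
  calc (∫⁻ s in Ioc 0 T, ENNReal.ofReal (s ^ β) * g s) ^ 2
      = (∫⁻ s in Ioc 0 T, ENNReal.ofReal (s ^ (β - 1 / 2)) *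
          (ENNReal.ofReal (s ^ (1 / 2 : ℝ)) * g s)) ^ 2 := by
        congr 1
        refine setLIntegral_congr_fun measurableSet_Ioc fun s hs => ?_
        rw [← mul_assoc, ← ENNReal.ofReal_mul (Real.rpow_nonneg hs.1.le _),
          ← Real.rpow_add hs.1, sub_add_cancel]
    _ ≤ (∫⁻ s in Ioc 0 T, ENNReal.ofReal (s ^ (β - 1 / 2)) ^ 2) *
          ∫⁻ s in Ioc 0 T, (ENNReal.ofReal (s ^ (1 / 2 : ℝ)) * g s) ^ 2 :=
        sq_lintegral_mul_le (by fun_prop) (by fun_prop)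
    _ = (∫⁻ s in Ioc 0 T, ENNReal.ofReal (s ^ (2 * β - 1))) *
          ∫⁻ s in Ioc 0 T, ENNReal.ofReal s * g s ^ 2 := by
        congr 1 <;> refine setLIntegral_congr_fun measurableSet_Ioc fun s hs => ?_
        · rw [ofReal_rpow_sq hs.1, mul_sub, mul_one_div_cancel two_ne_zero]
        · rw [mul_pow, ofReal_rpow_sq hs.1, mul_one_div_cancel two_ne_zero, Real.rpow_one]
    _ = _ := by rw [lintegral_Ioc_rpow_sub_one (by positivity) hT]

end CauchySchwarz

/-! ### The kernel transform -/

section KernelTransform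

/-- The map taking a slice `h = ψ̂(ξ, ·)` and `r = |ξ|` to the value
`λ̂(ξ) = r² ∫₀^∞ s h(s) u(s r^{1/α}) ds`, for an arbitrary kernel `u` in place of `u₁`. -/
noncomputable def kernelTransform (α : ℝ) (u : ℝ → ℝ) (h : ℝ → ℂ) (r : ℝ) : ℂ :=
  (r : ℂ) ^ 2 * ∫ s in Ioi (0 : ℝ), (s : ℂ) * h s * (u (s * r ^ (1 / α)) : ℝ)

variable {α B T r : ℝ} {u : ℝ → ℝ} {h : ℝ → ℂ}

theorem sq_mul_mul_kernel_le (hα : α ≠ 0) (hu_le : ∀ z > 0, z ^ (2 * α) * u z ≤ B) {s : ℝ}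
    (hs : 0 < s) (hr : 0 < r) : r ^ 2 * (s * u (s * r ^ (1 / α))) ≤ B * s ^ (1 - 2 * α) := by
  set z := s * r ^ (1 / α) with hz
  have z_rpow : z ^ (2 * α) = s ^ (2 * α) * r ^ 2 := by
    rw [hz, Real.mul_rpow hs.le (by positivity), ← Real.rpow_mul hr.le,
      show 1 / α * (2 * α) = 2 by field_simp, Real.rpow_two]
  have s_rpow : s = s ^ (1 - 2 * α) * s ^ (2 * α) := by
    rw [← Real.rpow_add hs, sub_add_cancel, Real.rpow_one]
  calc r ^ 2 * (s * u z) = r ^ 2 * (s ^ (1 - 2 * α) * s ^ (2 * α) * u z) := by rw [← s_rpow]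
    _ = z ^ (2 * α) * u z * s ^ (1 - 2 * α) := by rw [z_rpow]; ring
    _ ≤ B * s ^ (1 - 2 * α) := by
        gcongr
        exact hu_le z (by positivity)

theorem enorm_kernelTransform_le (hα : α ≠ 0) (hu_pos : ∀ z > 0, 0 < u z)
    (hu_le : ∀ z > 0, z ^ (2 * α) * u z ≤ B) (hh : ∀ s ∉ Ioc 0 T, h s = 0) (hr : 0 ≤ r) :
    ‖kernelTransform α u h r‖ₑ ≤
      ENNReal.ofReal B * ∫⁻ s in Ioc 0 T, ENNReal.ofReal (s ^ (1 - 2 * α)) * ‖h s‖ₑ := by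
  rcases hr.eq_or_lt with rfl | hr
  · simp [kernelTransform]
  have support_eq : ∫ s in Ioi (0 : ℝ), (s : ℂ) * h s * (u (s * r ^ (1 / α)) : ℝ) =
      ∫ s in Ioc 0 T, (s : ℂ) * h s * (u (s * r ^ (1 / α)) : ℝ) :=
    setIntegral_eq_of_subset_of_forall_sdiff_eq_zero measurableSet_Ioi Ioc_subset_Ioi_self
      fun s hs => by rw [hh s hs.2, mul_zero, zero_mul]
  rw [kernelTransform, support_eq, ← integral_const_mul,
    ← lintegral_const_mul' _ _ ENNReal.ofReal_ne_top]
  refine (enorm_integral_le_lintegral_enorm _).trans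
    (setLIntegral_mono' measurableSet_Ioc fun s hs => ?_)
  have hu := hu_pos (s * r ^ (1 / α)) (mul_pos hs.1 (by positivity))
  have norm_eq : ‖(r : ℂ) ^ 2 * ((s : ℂ) * h s * (u (s * r ^ (1 / α)) : ℝ))‖ =
      r ^ 2 * (s * u (s * r ^ (1 / α))) * ‖h s‖ := by
    simp only [norm_mul, norm_pow, Complex.norm_real, Real.norm_of_nonneg hr.le,
      Real.norm_of_nonneg hs.1.le, Real.norm_of_nonneg hu.le]
    ring
  rw [← ofReal_norm, norm_eq, ENNReal.ofReal_mul' (norm_nonneg _), ofReal_norm,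
    ← mul_assoc (ENNReal.ofReal B), ← ENNReal.ofReal_mul' (Real.rpow_nonneg hs.1.le _)]
  exact mul_le_mul_left (ENNReal.ofReal_le_ofReal (sq_mul_mul_kernel_le hα hu_le hs.1 hr)) _

theorem enorm_kernelTransform_sq_le (hα₀ : α ≠ 0) (hα : α < 1 / 2) (hu_pos : ∀ z > 0, 0 < u z)
    (hu_le : ∀ z > 0, z ^ (2 * α) * u z ≤ B) (hT : 0 ≤ T) (hh : ∀ s ∉ Ioc 0 T, h s = 0)
    (hmeas : AEStronglyMeasurable h (volume.restrict (Ioc 0 T))) (hr : 0 ≤ r) :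
    ‖kernelTransform α u h r‖ₑ ^ 2 ≤
      ENNReal.ofReal (B ^ 2 * (T ^ (2 * (1 - 2 * α)) / (2 * (1 - 2 * α)))) *
        ∫⁻ s in Ioc 0 T, ENNReal.ofReal s * ‖h s‖ₑ ^ 2 := by
  have hB : 0 ≤ B := by
    have := hu_le 1 one_pos
    rw [Real.one_rpow, one_mul] at this
    exact (hu_pos 1 one_pos).le.trans this
  calc ‖kernelTransform α u h r‖ₑ ^ 2
      ≤ (ENNReal.ofReal B *
          ∫⁻ s in Ioc 0 T, ENNReal.ofReal (s ^ (1 - 2 * α)) * ‖h s‖ₑ) ^ 2 := by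
        gcongr
        exact enorm_kernelTransform_le hα₀ hu_pos hu_le hh hr
    _ ≤ ENNReal.ofReal B ^ 2 *
          (ENNReal.ofReal (T ^ (2 * (1 - 2 * α)) / (2 * (1 - 2 * α))) *
            ∫⁻ s in Ioc 0 T, ENNReal.ofReal s * ‖h s‖ₑ ^ 2) := by
        rw [mul_pow]
        gcongr
        exact sq_lintegral_rpow_mul_le (by linarith) hT hmeas.enorm
    _ = _ := by rw [← mul_assoc, ENNReal.ofReal_mul (sq_nonneg B), ENNReal.ofReal_pow hB]

theorem kernelTransform_eq_zero_of_not_aestronglyMeasurable (hu_meas : Measurable u)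
    (hu_pos : ∀ z > 0, 0 < u z)
    (hh : ¬AEStronglyMeasurable h (volume.restrict (Ioc 0 T))) (hr : 0 ≤ r) :
    kernelTransform α u h r = 0 := by
  rcases hr.eq_or_lt with rfl | hr
  · simp [kernelTransform]
  rw [kernelTransform, integral_undef, mul_zero]
  intro hint
  let w : ℝ → ℂ := fun s => (s : ℂ) * (u (s * r ^ (1 / α)) : ℝ)
  have hw_meas : Measurable w := by fun_prop
  have hw_ne {s : ℝ} (hs : 0 < s) : w s ≠ 0 :=
    mul_ne_zero (mod_cast hs.ne') (mod_cast (hu_pos _ (by positivity)).ne')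
  refine hh (((hint.1.mono_set Ioc_subset_Ioi_self).mul
    hw_meas.inv.aestronglyMeasurable).congr ?_)
  filter_upwards [ae_restrict_mem measurableSet_Ioc] with s hs
  have integrand_eq : (s : ℂ) * h s * (u (s * r ^ (1 / α)) : ℝ) = h s * w s := by
    simp only [w]
    ring
  rw [Pi.mul_apply, Pi.inv_apply, integrand_eq]
  exact mul_inv_cancel_right₀ (hw_ne hs.1) _

theorem lintegral_enorm_kernelTransform_sq_le {E : Type*} [NormedAddCommGroup E]
    [SecondCountableTopology E] [MeasurableSpace E] [OpensMeasurableSpace E] {μ : Measure E}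
    [SFinite μ] (hα₀ : α ≠ 0) (hα : α < 1 / 2) (hu_meas : Measurable u)
    (hu_pos : ∀ z > 0, 0 < u z) (hu_le : ∀ z > 0, z ^ (2 * α) * u z ≤ B) (hT : 0 ≤ T)
    {F : E → ℝ → ℂ} (hF_cont : ∀ s, Continuous fun ξ => F ξ s)
    (hF_supp : ∀ ξ, ∀ s ∉ Ioc 0 T, F ξ s = 0) :
    ∫⁻ ξ, ‖kernelTransform α u (F ξ) ‖ξ‖‖ₑ ^ 2 ∂μ ≤
      ENNReal.ofReal (B ^ 2 * (T ^ (2 * (1 - 2 * α)) / (2 * (1 - 2 * α)))) *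
        ∫⁻ s in Ioc 0 T, ENNReal.ofReal s * ∫⁻ ξ, ‖F ξ s‖ₑ ^ 2 ∂μ := by
  set C := ENNReal.ofReal (B ^ 2 * (T ^ (2 * (1 - 2 * α)) / (2 * (1 - 2 * α))))
  set M := {ξ | AEStronglyMeasurable (F ξ) (volume.restrict (Ioc 0 T))}
  have hM : MeasurableSet M := (isClosed_setOf_aestronglyMeasurable hF_cont _).measurableSet
  have hF_meas : AEStronglyMeasurable (Function.uncurry F)
      ((μ.restrict M).prod (volume.restrict (Ioc 0 T))) :=
    aestronglyMeasurable_uncurry_of_continuous hF_cont (ae_restrict_mem hM)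
  calc ∫⁻ ξ, ‖kernelTransform α u (F ξ) ‖ξ‖‖ₑ ^ 2 ∂μ
      ≤ ∫⁻ ξ, M.indicator
          (fun ξ => C * ∫⁻ s in Ioc 0 T, ENNReal.ofReal s * ‖F ξ s‖ₑ ^ 2) ξ ∂μ := by
        refine lintegral_mono fun ξ => ?_
        by_cases hξ : ξ ∈ M
        · rw [indicator_of_mem hξ]
          exact enorm_kernelTransform_sq_le hα₀ hα hu_pos hu_le hT (hF_supp ξ) hξ (norm_nonneg ξ)
        · simp [kernelTransform_eq_zero_of_not_aestronglyMeasurable hu_meas hu_pos hξ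
            (norm_nonneg ξ)]
    _ = C * ∫⁻ ξ in M, (∫⁻ s in Ioc 0 T, ENNReal.ofReal s * ‖F ξ s‖ₑ ^ 2) ∂μ := by
        rw [lintegral_indicator hM, lintegral_const_mul' _ _ ENNReal.ofReal_ne_top]
    _ = C * ∫⁻ s in Ioc 0 T, (∫⁻ ξ in M, ENNReal.ofReal s * ‖F ξ s‖ₑ ^ 2 ∂μ) := by
        rw [lintegral_lintegral_swap]
        exact (by fun_prop : Measurable fun p : E × ℝ => ENNReal.ofReal p.2).aemeasurable.mul
          (hF_meas.enorm.pow_const 2)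
    _ ≤ C * ∫⁻ s in Ioc 0 T, ENNReal.ofReal s * ∫⁻ ξ, ‖F ξ s‖ₑ ^ 2 ∂μ := by
        gcongr with s
        rw [lintegral_const_mul' _ _ ENNReal.ofReal_ne_top]
        gcongr
        exact Measure.restrict_le_self

end KernelTransform

section HalfSpace

variable {X : Type*} [MeasureSpace X] [SFinite (volume : Measure X)]

theorem lintegral_lintegral_enorm_sq_eq_of_integrableOn {Y : Type*} [NormedAddCommGroup Y]
    {ψ : X × ℝ → Y} (hψ : IntegrableOn (fun p => ‖ψ p‖ ^ 2 * p.2) {p | 0 < p.2}) :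
    ∫⁻ s in Ioi 0, ENNReal.ofReal s * ∫⁻ x, ‖ψ (x, s)‖ₑ ^ 2 =
      ENNReal.ofReal (∫ p in {p : X × ℝ | 0 < p.2}, ‖ψ p‖ ^ 2 * p.2) := by
  have hvol : (volume : Measure (X × ℝ)).restrict {p | 0 < p.2} =
      (volume : Measure X).prod (volume.restrict (Ioi (0 : ℝ))) := by
    rw [show {p : X × ℝ | 0 < p.2} = univ ×ˢ Ioi 0 by ext; simp, Measure.volume_eq_prod,
      ← Measure.prod_restrict, Measure.restrict_univ]
  have hnonneg : 0 ≤ᵐ[(volume : Measure (X × ℝ)).restrict {p | 0 < p.2}]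
      fun p => ‖ψ p‖ ^ 2 * p.2 := by
    filter_upwards [ae_restrict_mem (measurableSet_lt measurable_const measurable_snd)] with p hp
    exact mul_nonneg (sq_nonneg _) (le_of_lt hp)
  have ofReal_eq {s : ℝ} (x : X) : ENNReal.ofReal (‖ψ (x, s)‖ ^ 2 * s) =
      ENNReal.ofReal s * ‖ψ (x, s)‖ₑ ^ 2 := by
    rw [mul_comm, ENNReal.ofReal_mul' (sq_nonneg _), ENNReal.ofReal_pow (norm_nonneg _),
      ofReal_norm]
  rw [ofReal_integral_eq_lintegral_ofReal hψ hnonneg, hvol, lintegral_prod_symm]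
  · simp only [ofReal_eq, lintegral_const_mul' _ _ ENNReal.ofReal_ne_top]
  · rw [← hvol]
    exact hψ.1.aemeasurable.ennreal_ofReal

end HalfSpace

theorem stmt8_general {E : Type*} [NormedAddCommGroup E] [InnerProductSpace ℝ E]
    [FiniteDimensional ℝ E] [MeasurableSpace E] [BorelSpace E] {α B T : ℝ} {u : ℝ → ℝ}
    (hα₀ : α ≠ 0) (hα : α < 1 / 2) (hu_meas : Measurable u) (hu_pos : ∀ z > 0, 0 < u z)
    (hu_le : ∀ z > 0, z ^ (2 * α) * u z ≤ B) (hT : 0 ≤ T) {ψ ψhat : E × ℝ → ℂ}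
    (hψhat : ∀ s, (fun ξ => ψhat (ξ, s)) = 𝓕 fun x => ψ (x, s))
    (hψ_supp : ∀ x, ∀ s ∉ Ioc 0 T, ψ (x, s) = 0)
    (hψ : IntegrableOn (fun p => ‖ψ p‖ ^ 2 * p.2) {p | 0 < p.2}) :
    ∫⁻ ξ, ENNReal.ofReal (‖kernelTransform α u (fun s => ψhat (ξ, s)) ‖ξ‖‖ ^ 2) ≤
      ENNReal.ofReal (B ^ 2 * (T ^ (2 * (1 - 2 * α)) / (2 * (1 - 2 * α))) *
        ∫ p in {p : E × ℝ | 0 < p.2}, ‖ψ p‖ ^ 2 * p.2) := by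
  have hψhat_cont (s : ℝ) : Continuous fun ξ => ψhat (ξ, s) :=
    hψhat s ▸ continuous_fourierTransform _
  have hψhat_supp (ξ : E) (s : ℝ) (hs : s ∉ Ioc 0 T) : ψhat (ξ, s) = 0 := by
    rw [congrFun (hψhat s) ξ]
    simp [Real.fourier_eq, hψ_supp _ s hs]
  have plancherel (s : ℝ) : ∫⁻ ξ, ‖ψhat (ξ, s)‖ₑ ^ 2 ≤ ∫⁻ x, ‖ψ (x, s)‖ₑ ^ 2 := by
    simpa only [← hψhat s] using lintegral_enorm_fourier_sq_le fun x => ψ (x, s)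
  set C := B ^ 2 * (T ^ (2 * (1 - 2 * α)) / (2 * (1 - 2 * α)))
  have hC : 0 ≤ C := by
    have : 0 < 1 - 2 * α := by linarith
    positivity
  simp only [ENNReal.ofReal_pow (norm_nonneg _), ofReal_norm]
  calc ∫⁻ ξ, ‖kernelTransform α u (fun s => ψhat (ξ, s)) ‖ξ‖‖ₑ ^ 2
      ≤ ENNReal.ofReal C * ∫⁻ s in Ioc 0 T, ENNReal.ofReal s * ∫⁻ ξ, ‖ψhat (ξ, s)‖ₑ ^ 2 :=
        lintegral_enorm_kernelTransform_sq_le hα₀ hα hu_meas hu_pos hu_le hT hψhat_cont hψhat_supp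
    _ ≤ ENNReal.ofReal C * ∫⁻ s in Ioi 0, ENNReal.ofReal s * ∫⁻ x, ‖ψ (x, s)‖ₑ ^ 2 := by
        refine mul_le_mul_right ((lintegral_mono fun s => ?_).trans
          (lintegral_mono_set Ioc_subset_Ioi_self)) _
        exact mul_le_mul_right (plancherel s) _
    _ = ENNReal.ofReal (C * ∫ p in {p : E × ℝ | 0 < p.2}, ‖ψ p‖ ^ 2 * p.2) := by
        rw [lintegral_lintegral_enorm_sq_eq_of_integrableOn hψ, ENNReal.ofReal_mul hC]

/-- For `ψ ∈ L²(Ω, z dμ)` supported in `ℝⁿ × (0,1]`, the function `λ` defined via its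
Fourier transform `λ̂(ξ) = |ξ|² ∫₀^∞ s ψ̂(ξ,s) u₁(s |ξ|^{1/α_n}) ds` lies in `L²(ℝⁿ)` with
`‖λ‖_{L²} ≤ C ‖ψ‖_{L²(Ω, z dμ)}`, with `C` depending only on `n`. -/
theorem stmt8 (n : ℕ) (hn : 2 ≤ n) :
    ∃ C > (0 : ℝ), ∀ ψ ψhat : EuclideanSpace ℝ (Fin n) × ℝ → ℂ,
      (∀ s : ℝ, (fun ξ => ψhat (ξ, s)) = 𝓕 (fun x => ψ (x, s))) →
      (∀ (x : EuclideanSpace ℝ (Fin n)) (s : ℝ), s ∉ Set.Ioc (0 : ℝ) 1 → ψ (x, s) = 0) →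
      IntegrableOn (fun p => ‖ψ p‖ ^ 2 * p.2) {p | 0 < p.2} →
      (∫⁻ ξ : EuclideanSpace ℝ (Fin n),
          ENNReal.ofReal
            (‖(‖ξ‖ ^ 2 : ℂ) * ∫ s in Set.Ioi (0 : ℝ),
                (s : ℂ) * ψhat (ξ, s) * (taubU1 n (s * ‖ξ‖ ^ ((1 : ℝ) / alphaN n)) : ℝ)‖ ^ 2))
        ≤ ENNReal.ofReal
            (C * ∫ p in {p : EuclideanSpace ℝ (Fin n) × ℝ | 0 < p.2}, ‖ψ p‖ ^ 2 * p.2) := by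
  have hα := alphaN_pos hn
  have hα' : 0 < 1 - 2 * alphaN n := by linarith [alphaN_lt_half (n := n) (by positivity)]
  exact ⟨_, by positivity, fun ψ ψhat hψhat hψ_supp hψ => stmt8_general hα.ne'
    (alphaN_lt_half (by positivity)) (measurable_taubU1 n) (fun _ => taubU1_pos hn)
    (fun _ => rpow_mul_taubU1_le hn) zero_le_one hψhat hψ_supp hψ⟩
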